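/- Let F be a field of characteristic 2, K/F an extension with K² ⊆ F, a, b ∈ F with a ≠ 0, and x ∈ K*. Then π := ⟨1,x²⟩_b ⊗ [a,b] has coefficients in F (since x² ∈ F*) and lies in the Witt kernel W_q(K/F), and in W_q(F) one has the Witt equivalence [a,b] ⊥ π ∼ [ax², b/x²]. -/

import Mathlib

/-!  A concrete coefficient-matrix model of (possibly singular) finite-dimensional
quadratic forms over a field, suitable for characteristic 2. -/

/-- Coefficient representation of a (finite-dimensional) quadratic form over a field `F`:
the form of dimension `dim` given by `q(x) = ∑ i j, c i j * x i * x j`. -/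
structure QF (F : Type*) [Field F] : Type _ where
  dim : ℕ
  c : Matrix (Fin dim) (Fin dim) F

namespace QF

variable {F E : Type*} [Field F] [Field E]

/-- Evaluation of the quadratic form at a vector. -/
def eval (q : QF F) (x : Fin q.dim → F) : F :=
  ∑ i, ∑ j, q.c i j * x i * x j

/-- Scalar extension (base change) of a quadratic form along a ring homomorphism. -/
def map (f : F →+* E) (q : QF F) : QF E :=
  ⟨q.dim, fun i j => f (q.c i j)⟩

/-- Orthogonal sum. -/
def orthSum (q q' : QF F) : QF F :=
  ⟨q.dim + q'.dim,
    Matrix.reindex finSumFinEquiv finSumFinEquiv (Matrix.fromBlocks q.c 0 0 q'.c)⟩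

/-- Scaling `a • q`. -/
def smul (a : F) (q : QF F) : QF F := ⟨q.dim, a • q.c⟩

/-- The nonsingular binary quadratic form `[a,b] : (x,y) ↦ ax² + xy + by²`. -/
def bin (a b : F) : QF F := ⟨2, !![a, 1; 0, b]⟩

/-- The diagonal (totally singular) quadratic form `⟨a₁, …, aₙ⟩`. -/
def diag {n : ℕ} (v : Fin n → F) : QF F := ⟨n, Matrix.diagonal v⟩

/-- The zero-dimensional quadratic form. -/
def nil : QF F := { dim := 0, c := 0 }

/-- The one-dimensional form `⟨1⟩`. -/
def unit : QF F := diag (fun _ : Fin 1 => (1 : F))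

/-- Orthogonal sum of a list of forms. -/
def sumList (l : List (QF F)) : QF F := l.foldr orthSum nil

/-- `pfTensor [a₁,…,aₙ] q` is the tensor product `⟨⟨a₁,…,aₙ⟩⟩_b ⊗ q` of the bilinear
Pfister form `⟨⟨a₁,…,aₙ⟩⟩_b = ⟨1,a₁⟩_b ⊗ ⋯ ⊗ ⟨1,aₙ⟩_b` with the quadratic form `q`,
via `⟨1,a⟩_b ⊗ q ≅ q ⊥ a·q`. -/
def pfTensor (l : List F) (q : QF F) : QF F :=
  l.foldr (fun a r => orthSum r (smul a r)) q

/-- The hyperbolic plane `ℍ ≅ [0,0]`. -/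
def hypPlane : QF F := bin 0 0

/-- The orthogonal sum of `k` hyperbolic planes. -/
def hyp (k : ℕ) : QF F := sumList (List.replicate k hypPlane)

/-- The `l`-dimensional zero form `⟨0,…,0⟩`. -/
def zeros (l : ℕ) : QF F := diag (fun _ : Fin l => (0 : F))

/-- Isometry of quadratic forms. -/
def Isometric (q q' : QF F) : Prop :=
  ∃ e : (Fin q.dim → F) ≃ₗ[F] (Fin q'.dim → F), ∀ x, q'.eval (e x) = q.eval x

/-- Anisotropy: the form has no nontrivial zero. -/
def Anisotropic (q : QF F) : Prop := ∀ x, q.eval x = 0 → x = 0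

/-- A quadratic form is nonsingular if the radical of its polar form
`B_q(x,y) = q(x+y) - q(x) - q(y)` (with matrix `c + cᵀ`) is trivial. -/
def Nonsingular (q : QF F) : Prop := ∀ x, (q.c + q.c.transpose).mulVec x = 0 → x = 0

/-- A quadratic form is totally singular if its polar form vanishes identically. -/
def TotallySingular (q : QF F) : Prop := q.c + q.c.transpose = 0

/-- A quadratic form is hyperbolic if it is isometric to an orthogonal sum of
hyperbolic planes. -/
def Hyperbolic (q : QF F) : Prop := ∃ k, Isometric q (hyp k)

/-- Witt equivalence: `q ~ q'` iff the anisotropic parts agree, equivalently the two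
forms become isometric after adding suitable numbers of hyperbolic planes and zero
forms. -/
def WittEquiv (q q' : QF F) : Prop :=
  ∃ k k' l l', Isometric (orthSum q (orthSum (hyp k) (zeros l)))
    (orthSum q' (orthSum (hyp k') (zeros l')))

/-- `AnisoPartOf φ q` : `φ` is (isometric to) the anisotropic part of `q`, i.e. `φ` is
anisotropic and `q ≅ k × ℍ ⊥ φ ⊥ ⟨0,…,0⟩`. -/
def AnisoPartOf (φ q : QF F) : Prop :=
  Anisotropic φ ∧ ∃ k l, Isometric q (orthSum (hyp k) (orthSum φ (zeros l)))

/-- `Dominates q' q` means `q ≺ q'`, i.e. `q'` dominates `q`: there is an injective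
linear map `t` of the underlying spaces with `q' ∘ t = q`. -/
def Dominates (q' q : QF F) : Prop :=
  ∃ t : (Fin q.dim → F) →ₗ[F] (Fin q'.dim → F), Function.Injective t ∧
    ∀ x, q'.eval (t x) = q.eval x

/-- The affine quadric polynomial `∑ cᵢⱼ XᵢXⱼ` of a quadratic form. -/
noncomputable def toPoly (q : QF F) : MvPolynomial (Fin q.dim) F :=
  ∑ i, ∑ j, MvPolynomial.C (q.c i j) * (MvPolynomial.X i * MvPolynomial.X j)

/-- The affine coordinate ring of the (reduced) quadric `q = 0`. -/
abbrev CoordRing (q : QF F) : Type _ :=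
  MvPolynomial (Fin q.dim) F ⧸ (Ideal.span {q.toPoly}).radical

/-- The function field of the quadric `q = 0` (assuming the quadric is integral). -/
abbrev FunctionField (q : QF F) [IsDomain (CoordRing q)] : Type _ :=
  FractionRing (CoordRing q)

/-- The canonical ring homomorphism from a base field `F` into the function field of a
quadric defined over an extension field `K` of `F`. -/
noncomputable def toFunctionField {K : Type*} [Field K] [Algebra F K] (q : QF K)
    [IsDomain (CoordRing q)] : F →+* FunctionField q :=
  (algebraMap (CoordRing q) (FunctionField q)).comp
    ((algebraMap K (CoordRing q)).comp (algebraMap F K))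

end QF

/-!
Let `q` be a nonsingular quadratic form over a field of characteristic 2, so that `-q = q`, and
write `q v = B v v` with `B` bilinear and `P = B + Bᵗ` its (invertible) polar form. Since
`q u - q v = B w w + P v w` for `w = u - v`, the coordinates `(B w + P v, w)` identify `q ⊥ q`
with the evaluation pairing `(φ, w) ↦ φ w` on `V* × V`, which is a sum of hyperbolic planes.
Over `K` scaling by `x²` is an isometry, whence `q ⊥ x²q ≅ q ⊥ q` is hyperbolic; over `F`,
`q ⊥ (q ⊥ tq) ≅ (q ⊥ q) ⊥ tq ∼ tq`. Finally `t[a,b] ≅ [at, b/t]`.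
-/

namespace QF

open QuadraticForm (dualProd)

section QuadraticMap

variable {R M M₁ M₂ M₃ N : Type*}

section Semiring

variable [CommSemiring R] [AddCommMonoid M₁] [AddCommMonoid M₂] [AddCommMonoid M₃]
  [AddCommMonoid N] [Module R M₁] [Module R M₂] [Module R M₃] [Module R N]

theorem prod_assoc_equivalent (Q₁ : QuadraticMap R M₁ N) (Q₂ : QuadraticMap R M₂ N)
    (Q₃ : QuadraticMap R M₃ N) :
    ((Q₁.prod Q₂).prod Q₃).Equivalent (Q₁.prod (Q₂.prod Q₃)) :=
  ⟨⟨LinearEquiv.prodAssoc R M₁ M₂ M₃, fun v => by simp [add_assoc]⟩⟩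

theorem prod_equivalent_of_subsingleton [Subsingleton M₂] (Q₁ : QuadraticMap R M₁ N)
    (Q₂ : QuadraticMap R M₂ N) : (Q₁.prod Q₂).Equivalent Q₁ :=
  letI : Unique M₂ := uniqueOfSubsingleton 0
  ⟨⟨LinearEquiv.prodUnique, fun v => by simp [Subsingleton.elim v.2 0]⟩⟩

theorem equivalent_of_subsingleton [Subsingleton M₁] [Subsingleton M₂]
    (Q₁ : QuadraticMap R M₁ N) (Q₂ : QuadraticMap R M₂ N) : Q₁.Equivalent Q₂ :=
  ⟨⟨0, fun v => by simp [Subsingleton.elim v 0]⟩⟩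

end Semiring

theorem prod_neg_equivalent_dualProd [CommRing R] [AddCommGroup M] [Module R M]
    (B : LinearMap.BilinForm R M) (hB : Function.Bijective (B + B.flip)) :
    (B.toQuadraticMap.prod (-B.toQuadraticMap)).Equivalent (dualProd R M) := by
  let polar : M ≃ₗ[R] Module.Dual R M := .ofBijective (B + B.flip) hB
  let shear : (M × M) ≃ₗ[R] M × M :=
    .prodComm R M M ≪≫ₗ .skewProd (.refl R M) (.refl R M) (-.id) ≪≫ₗ .prodComm R M M
  let coords : (M × M) ≃ₗ[R] Module.Dual R M × M :=
    shear ≪≫ₗ .skewProd (.refl R M) polar B ≪≫ₗ .prodComm R _ _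
  refine ⟨⟨coords, fun ⟨u, v⟩ => ?_⟩⟩
  calc dualProd R M (coords (u, v))
      = B v (u - v) + B (u - v) v + B (u - v) (u - v) := by
        simp [coords, shear, polar, sub_eq_add_neg]
    _ = B u u - B v v := by
        simp only [map_sub, LinearMap.sub_apply]
        ring
    _ = (B.toQuadraticMap.prod (-B.toQuadraticMap)) (u, v) := by simp [sub_eq_add_neg]

end QuadraticMap

variable {F K : Type*} [Field F] [Field K] {q q' r r' s : QF F}

/-- The quadratic form on `Fⁿ` with coefficient matrix `q.c`, as a Mathlib `QuadraticForm`. It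
gives access to the library's isometries of orthogonal sums. -/
noncomputable def toQuadraticForm (q : QF F) : QuadraticForm F (Fin q.dim → F) :=
  (Matrix.toBilin' q.c).toQuadraticMap

theorem toQuadraticForm_apply (q : QF F) (v : Fin q.dim → F) :
    q.toQuadraticForm v = q.eval v := by
  simp only [toQuadraticForm, LinearMap.BilinMap.toQuadraticMap_apply, Matrix.toBilin'_apply, eval]
  exact Finset.sum_congr rfl fun i _ => Finset.sum_congr rfl fun j _ => by ring

theorem eval_smul (t : F) (q : QF F) (v : Fin q.dim → F) : (smul t q).eval v = t * q.eval v := by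
  change ∑ i, ∑ j, (t * q.c i j) * v i * v j = _
  simp only [eval, Finset.mul_sum, mul_assoc]

theorem eval_orthSum (q r : QF F) (v : Fin (q.dim + r.dim) → F) :
    (orthSum q r).eval v =
      q.eval (fun i => v (Fin.castAdd r.dim i)) + r.eval (fun i => v (Fin.natAdd q.dim i)) := by
  change ∑ i : Fin (q.dim + r.dim), ∑ j : Fin (q.dim + r.dim), (orthSum q r).c i j * v i * v j = _
  simp [Fin.sum_univ_add, orthSum, eval]

theorem isometric_iff_equivalent :
    Isometric q r ↔ q.toQuadraticForm.Equivalent r.toQuadraticForm := by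
  constructor
  · rintro ⟨e, he⟩
    exact ⟨⟨e, fun v => by simpa only [toQuadraticForm_apply] using! he v⟩⟩
  · rintro ⟨e⟩
    exact ⟨e.toLinearEquiv, fun v => by simpa only [toQuadraticForm_apply] using! e.map_app v⟩

theorem toQuadraticForm_orthSum (q r : QF F) :
    (orthSum q r).toQuadraticForm.Equivalent (q.toQuadraticForm.prod r.toQuadraticForm) := by
  refine ⟨⟨LinearEquiv.funCongrLeft F F finSumFinEquiv ≪≫ₗ
    LinearEquiv.sumArrowLequivProdArrow _ _ F F, fun v => ?_⟩⟩
  rw [toQuadraticForm_apply, QuadraticMap.prod_apply, toQuadraticForm_apply, toQuadraticForm_apply]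
  exact (eval_orthSum q r v).symm

theorem Isometric.refl (q : QF F) : Isometric q q :=
  isometric_iff_equivalent.2 (.refl _)

theorem Isometric.symm (h : Isometric q r) : Isometric r q :=
  isometric_iff_equivalent.2 (isometric_iff_equivalent.1 h).symm

theorem Isometric.trans (h : Isometric q r) (h' : Isometric r s) : Isometric q s :=
  isometric_iff_equivalent.2
    ((isometric_iff_equivalent.1 h).trans (isometric_iff_equivalent.1 h'))

theorem isometric_orthSum_iff :
    Isometric (orthSum q r) s ↔
      (q.toQuadraticForm.prod r.toQuadraticForm).Equivalent s.toQuadraticForm := by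
  rw [isometric_iff_equivalent]
  exact ⟨(toQuadraticForm_orthSum q r).symm.trans, (toQuadraticForm_orthSum q r).trans⟩

theorem Isometric.orthSum (h : Isometric q q') (h' : Isometric r r') :
    Isometric (orthSum q r) (orthSum q' r') :=
  isometric_orthSum_iff.2 <| ((isometric_iff_equivalent.1 h).prod
    (isometric_iff_equivalent.1 h')).trans (toQuadraticForm_orthSum q' r').symm

theorem orthSum_comm_isometric (q r : QF F) : Isometric (orthSum q r) (orthSum r q) :=
  isometric_orthSum_iff.2 <|
    .trans ⟨.prodComm _ _⟩ (toQuadraticForm_orthSum r q).symm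

theorem orthSum_assoc_isometric (q r s : QF F) :
    Isometric (orthSum (orthSum q r) s) (orthSum q (orthSum r s)) :=
  isometric_orthSum_iff.2 <|
    ((toQuadraticForm_orthSum q r).prod (.refl _)).trans <|
    (prod_assoc_equivalent _ _ _).trans <|
    ((QuadraticMap.Equivalent.refl _).prod (toQuadraticForm_orthSum r s).symm).trans
      (toQuadraticForm_orthSum q _).symm

theorem orthSum_isometric_of_dim_eq_zero (q : QF F) (hr : r.dim = 0) :
    Isometric (orthSum q r) q := by
  have : IsEmpty (Fin r.dim) := hr ▸ Fin.isEmpty'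
  exact isometric_orthSum_iff.2 (prod_equivalent_of_subsingleton _ _)

theorem smul_sq_isometric {x : F} (hx : x ≠ 0) (q : QF F) : Isometric (smul (x ^ 2) q) q := by
  refine ⟨LinearEquiv.smulOfNeZero F _ x hx, fun v : Fin q.dim → F => ?_⟩
  calc q.eval (x • v) = x * x * q.eval v := by
        rw [← toQuadraticForm_apply, QuadraticMap.map_smul, toQuadraticForm_apply, smul_eq_mul]
    _ = (smul (x ^ 2) q).eval v := by rw [eval_smul, sq]

theorem eval_bin (a b : F) (v : Fin 2 → F) :
    (bin a b).eval v = a * v 0 ^ 2 + v 0 * v 1 + b * v 1 ^ 2 := by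
  change ∑ i : Fin 2, ∑ j : Fin 2, !![a, 1; 0, b] i j * v i * v j = _
  simp [Fin.sum_univ_two, sq, mul_assoc, add_assoc]

theorem smul_bin_isometric (a b : F) {t : F} (ht : t ≠ 0) :
    Isometric (smul t (bin a b)) (bin (a * t) (b / t)) := by
  let rescale : (Fin 2 → F) ≃ₗ[F] (Fin 2 → F) :=
    .piCongrRight fun i => .smulOfNeZero F F (![1, t] i) (by fin_cases i <;> simp [ht])
  refine ⟨rescale, fun v : Fin 2 → F => ?_⟩
  calc (bin (a * t) (b / t)).eval (rescale v)
      = a * t * v 0 ^ 2 + v 0 * (t * v 1) + b / t * (t * v 1) ^ 2 := by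
        simp [eval_bin, rescale]
    _ = t * (bin a b).eval v := by
        rw [eval_bin]
        field_simp
    _ = (smul t (bin a b)).eval v := (eval_smul t (bin a b) v).symm

theorem hypPlane_equivalent_dualProd :
    (hypPlane : QF F).toQuadraticForm.Equivalent (dualProd F F) := by
  let toPair : (Fin 2 → F) ≃ₗ[F] Module.Dual F F × F :=
    .finTwoArrow F F ≪≫ₗ .prodCongr (LinearMap.ringLmapEquivSelf F F F).symm (.refl F F)
  refine ⟨⟨toPair, fun v : Fin 2 → F => ?_⟩⟩
  calc dualProd F F (toPair v) = v 0 * v 1 := by simp [toPair, mul_comm]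
    _ = (bin 0 0).eval v := by simp [eval_bin]
    _ = (hypPlane : QF F).toQuadraticForm v := (toQuadraticForm_apply hypPlane v).symm

theorem hyp_equivalent_dualProd (k : ℕ) :
    (hyp k : QF F).toQuadraticForm.Equivalent (dualProd F (Fin k → F)) := by
  induction k with
  | zero =>
    have : Subsingleton (Fin (hyp 0 : QF F).dim → F) := inferInstanceAs (Subsingleton (Fin 0 → F))
    exact equivalent_of_subsingleton _ _
  | succ k ih =>
    exact (toQuadraticForm_orthSum hypPlane (hyp k)).trans <|
      (hypPlane_equivalent_dualProd.prod ih).trans <|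
      .trans ⟨QuadraticForm.dualProdProdIsometry.symm⟩
        ⟨QuadraticForm.dualProdIsometry (Fin.consLinearEquiv F fun _ => F)⟩

/-- The Gram matrix `c + cᵀ` of the polar form of `q`. -/
def polarMatrix (q : QF F) : Matrix (Fin q.dim) (Fin q.dim) F := q.c + q.c.transpose

theorem nonsingular_iff_det_ne_zero : q.Nonsingular ↔ q.polarMatrix.det ≠ 0 := by
  rw [ne_eq, ← Matrix.exists_mulVec_eq_zero_iff]
  simp only [Nonsingular, polarMatrix]
  grind

theorem det_polarMatrix_orthSum (q r : QF F) :
    (orthSum q r).polarMatrix.det = q.polarMatrix.det * r.polarMatrix.det := by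
  have block_diagonal : (orthSum q r).polarMatrix = Matrix.reindex finSumFinEquiv finSumFinEquiv
      (Matrix.fromBlocks q.polarMatrix 0 0 r.polarMatrix) := by
    change Matrix.reindex finSumFinEquiv finSumFinEquiv
      (Matrix.fromBlocks q.c 0 0 r.c + (Matrix.fromBlocks q.c 0 0 r.c).transpose) = _
    simp [Matrix.fromBlocks_transpose, Matrix.fromBlocks_add, polarMatrix]
  rw [block_diagonal]
  exact (Matrix.det_reindex_self _ _).trans (Matrix.det_fromBlocks_zero₂₁ _ _ _)

theorem det_polarMatrix_smul (t : F) (q : QF F) :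
    (smul t q).polarMatrix.det = t ^ q.dim * q.polarMatrix.det := by
  have scaled : (smul t q).polarMatrix = t • q.polarMatrix := (smul_add t q.c q.c.transpose).symm
  rw [scaled]
  exact (Matrix.det_smul q.polarMatrix t).trans (by rw [Fintype.card_fin])

theorem det_polarMatrix_map (f : F →+* K) (q : QF F) :
    (q.map f).polarMatrix.det = f q.polarMatrix.det := by
  have mapped : (q.map f).polarMatrix = f.mapMatrix q.polarMatrix := by
    ext i j
    exact (map_add f (q.c i j) (q.c j i)).symm
  rw [mapped]
  exact (f.map_det q.polarMatrix).symm

theorem det_polarMatrix_bin (a b : F) : (bin a b).polarMatrix.det = 4 * a * b - 1 := by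
  have gram : (bin a b).polarMatrix = !![a + a, 1; 1, b + b] := by
    change !![a, 1; 0, b] + !![a, 1; 0, b].transpose = _
    ext i j
    fin_cases i <;> fin_cases j <;> simp
  rw [gram]
  exact (Matrix.det_fin_two_of _ _ _ _).trans (by ring)

theorem Nonsingular.orthSum (hq : q.Nonsingular) (hr : r.Nonsingular) :
    (orthSum q r).Nonsingular := by
  rw [nonsingular_iff_det_ne_zero] at *
  rw [det_polarMatrix_orthSum]
  exact mul_ne_zero hq hr

theorem Nonsingular.smul {t : F} (ht : t ≠ 0) (hq : q.Nonsingular) : (smul t q).Nonsingular := by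
  rw [nonsingular_iff_det_ne_zero] at *
  rw [det_polarMatrix_smul]
  exact mul_ne_zero (pow_ne_zero _ ht) hq

theorem Nonsingular.map (f : F →+* K) (hq : q.Nonsingular) : (q.map f).Nonsingular := by
  rw [nonsingular_iff_det_ne_zero] at *
  rw [det_polarMatrix_map]
  exact (map_ne_zero f).2 hq

theorem nonsingular_bin [CharP F 2] (a b : F) : (bin a b).Nonsingular := by
  have four_eq_zero : (4 : F) = 0 := (CharP.cast_eq_zero_iff F 2 4).2 (by norm_num)
  simp [nonsingular_iff_det_ne_zero, det_polarMatrix_bin, four_eq_zero]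

theorem Nonsingular.bijective_polar (hq : q.Nonsingular) :
    Function.Bijective (Matrix.toBilin' q.c + (Matrix.toBilin' q.c).flip) := by
  have polar_eq : Matrix.toBilin' q.c + (Matrix.toBilin' q.c).flip =
      Matrix.toBilin' q.polarMatrix := by
    ext i j
    simp [polarMatrix]
  rw [polar_eq]
  exact (LinearMap.BilinForm.toDual _ (LinearMap.BilinForm.nondegenerate_toBilin'_of_det_ne_zero' _
    (nonsingular_iff_det_ne_zero.1 hq))).bijective

theorem map_orthSum (f : F →+* K) (q r : QF F) :
    (orthSum q r).map f = orthSum (q.map f) (r.map f) := by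
  refine congrArg (QF.mk (q.dim + r.dim)) ?_
  change (Matrix.reindex finSumFinEquiv finSumFinEquiv (Matrix.fromBlocks q.c 0 0 r.c)).map f =
    Matrix.reindex finSumFinEquiv finSumFinEquiv (Matrix.fromBlocks (q.c.map f) 0 0 (r.c.map f))
  simp [← Matrix.submatrix_map, Matrix.fromBlocks_map]

protected theorem map_smul (f : F →+* K) (t : F) (q : QF F) :
    (smul t q).map f = smul (f t) (q.map f) :=
  congrArg (QF.mk q.dim) <| Matrix.ext fun i j => map_mul f t (q.c i j)

theorem Nonsingular.orthSum_self_isometric_hyp [CharP F 2] (hq : q.Nonsingular) :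
    Isometric (QF.orthSum q q) (hyp q.dim) := by
  have neg_eq_self : -q.toQuadraticForm = q.toQuadraticForm := by
    ext v
    simp [CharTwo.neg_eq]
  have equiv_dualProd := prod_neg_equivalent_dualProd _ hq.bijective_polar
  rw [← toQuadraticForm, neg_eq_self] at equiv_dualProd
  exact isometric_orthSum_iff.2 (equiv_dualProd.trans (hyp_equivalent_dualProd _).symm)

theorem WittEquiv.of_isometric_orthSum_hyp {k : ℕ} (h : Isometric q (orthSum r (hyp k))) :
    WittEquiv q r :=
  ⟨0, k, 0, 0, (orthSum_isometric_of_dim_eq_zero q rfl).trans <| h.trans <|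
    (Isometric.refl r).orthSum (orthSum_isometric_of_dim_eq_zero (hyp k) rfl).symm⟩

theorem WittEquiv.trans_isometric (h : WittEquiv q r) (h' : Isometric r s) : WittEquiv q s := by
  obtain ⟨k, k', l, l', hqr⟩ := h
  exact ⟨k, k', l, l', hqr.trans (h'.orthSum (.refl _))⟩

theorem Nonsingular.orthSum_orthSum_self_wittEquiv [CharP F 2] (hq : q.Nonsingular) (r : QF F) :
    WittEquiv (QF.orthSum q (QF.orthSum q r)) r :=
  .of_isometric_orthSum_hyp <| (orthSum_assoc_isometric q q r).symm.trans <|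
    (hq.orthSum_self_isometric_hyp.orthSum (.refl r)).trans (orthSum_comm_isometric _ r)

theorem Nonsingular.hyperbolic_orthSum_sq_smul [CharP F 2] (hq : q.Nonsingular) {x : F}
    (hx : x ≠ 0) : Hyperbolic (QF.orthSum q (QF.smul (x ^ 2) q)) :=
  ⟨q.dim, ((Isometric.refl q).orthSum (smul_sq_isometric hx q)).trans
    hq.orthSum_self_isometric_hyp⟩

end QF

open QF in
theorem scaling_by_square_relation_general {F K : Type*} [Field F] [Field K] [CharP F 2]
    (f : F →+* K) {q : QF F} (hq : q.Nonsingular) {x : K} (hx : x ≠ 0) {t : F}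
    (ht : f t = x ^ 2) :
    (q.orthSum (smul t q)).Nonsingular ∧
    Hyperbolic ((q.orthSum (smul t q)).map f) ∧
    WittEquiv (q.orthSum (q.orthSum (smul t q))) (smul t q) := by
  have : CharP K 2 := charP_of_injective_ringHom f.injective 2
  have ht₀ : t ≠ 0 := (map_ne_zero f).1 (ht ▸ pow_ne_zero 2 hx)
  refine ⟨hq.orthSum (hq.smul ht₀), ?_, hq.orthSum_orthSum_self_wittEquiv _⟩
  rw [map_orthSum, QF.map_smul, ht]
  exact (hq.map f).hyperbolic_orthSum_sq_smul hx

open QF in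
/-- Let `F` have characteristic 2, `K/F` an extension with `K² ⊆ F`,
`a, b ∈ F` with `a ≠ 0`, and `x ∈ K*`; let `t ∈ F` with `t = x²` in `K` (such `t`
exists since `K² ⊆ F`).  Then `π := ⟨1,x²⟩_b ⊗ [a,b] = ⟨1,t⟩_b ⊗ [a,b]` is a
nonsingular quadratic form over `F` lying in the Witt kernel `W_q(K/F)` (it becomes
hyperbolic over `K`), and `[a,b] ⊥ π ∼ [ax², b/x²] = [at, b/t]` in `W_q(F)`. -/
theorem scaling_by_square_relation
    (F K : Type*) [Field F] [Field K] [Algebra F K] [CharP F 2]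
    (hK : ∀ x : K, ∃ y : F, algebraMap F K y = x ^ 2)
    (a b : F) (ha : a ≠ 0) (x : K) (hx : x ≠ 0)
    (t : F) (ht : algebraMap F K t = x ^ 2) :
    ((bin a b).orthSum (smul t (bin a b))).Nonsingular ∧
    Hyperbolic (((bin a b).orthSum (smul t (bin a b))).map (algebraMap F K)) ∧
    WittEquiv ((bin a b).orthSum ((bin a b).orthSum (smul t (bin a b))))
      (bin (a * t) (b / t)) := by
  have ht₀ : t ≠ 0 := (map_ne_zero (algebraMap F K)).1 (ht ▸ pow_ne_zero 2 hx)
  obtain ⟨hπ, hπK, hW⟩ := scaling_by_square_relation_general _ (nonsingular_bin a b) hx ht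
  exact ⟨hπ, hπK, hW.trans_isometric (smul_bin_isometric a b ht₀)⟩
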